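/- arXiv:1207.0632 — 5 statements merged into one kernel-verified Lean document; each statement's English description precedes it below -/
import Mathlib

section
/- If x : ℝ → ℂ is band-limited with period T, then x can be reconstructed from its N samples taken at spacing T/N: for every t ∈ ℝ, x(t) = Σ_{k=0}^{N−1} x(t_k) · D(t − t_k). -/
/-!
The samples of the harmonics `exp (i m ω₀ t)`, `|m| ≤ (N - 1) / 2`, are discrete characters
`k ↦ exp (2πi m k / N)`. Two such frequencies differ by less than `N`, so distinct ones give
orthogonal sample vectors (`sum_exp_eq_zero`, a geometric sum over a nontrivial `N`-th root of
unity). Hence pairing the samples of the `m`-th harmonic with the shifted harmonics that make up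
the Dirichlet kernel leaves only the `m`-th one (`sum_harmonic_sample`), so every harmonic is
reproduced, and the theorem follows by linearity.
-/

open Complex Finset

/-- The Dirichlet (periodic sinc) kernel:
`D N T t = (1/N) Σ_{m=-(N-1)/2}^{(N-1)/2} exp(i m ω₀ t)` with `ω₀ = 2π/T`. -/
noncomputable def dirichlet (N : ℕ) (T : ℝ) (t : ℝ) : ℂ :=
  (1 / (N : ℂ)) *
    ∑ m ∈ Finset.Icc (-(((N : ℤ) - 1) / 2)) (((N : ℤ) - 1) / 2),
      Complex.exp (Complex.I * (m : ℂ) * ((2 * Real.pi / T : ℝ) : ℂ) * (t : ℂ))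

/-- The sample points `t_k = k T / N` for `k = 0, …, N-1`. -/
noncomputable def samplePt (N : ℕ) (T : ℝ) (k : Fin N) : ℝ := (k : ℝ) * T / N

/-- A function is band-limited with period `T` if it is a linear combination of the
harmonics `exp(i m ω₀ t)` for `|m| ≤ (N-1)/2`, where `ω₀ = 2π/T`. -/
def BandLimited (N : ℕ) (T : ℝ) (x : ℝ → ℂ) : Prop :=
  ∃ a : ℤ → ℂ, ∀ t : ℝ,
    x t = ∑ m ∈ Finset.Icc (-(((N : ℤ) - 1) / 2)) (((N : ℤ) - 1) / 2),
      a m * Complex.exp (Complex.I * (m : ℂ) * ((2 * Real.pi / T : ℝ) : ℂ) * (t : ℂ))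

/-- Orthogonality of discrete characters: an `N`-th root of unity `exp (2πi d / N)` with
`0 < |d| < N` is not `1`, so the geometric sum of its powers vanishes. -/
lemma sum_exp_eq_zero (N : ℕ) (hNpos : 0 < N) (d : ℤ) (hd : d ≠ 0) (hdN : |d| < N) :
    ∑ k : Fin N, Complex.exp (2 * Real.pi * Complex.I * d / N) ^ (k : ℕ) = 0 := by
  have hN0 : (N : ℂ) ≠ 0 := by exact_mod_cast hNpos.ne'
  rw [Fin.sum_univ_eq_sum_range (fun k => Complex.exp (2 * Real.pi * Complex.I * d / N) ^ k) N]
  have hpow : Complex.exp (2 * Real.pi * Complex.I * d / N) ^ N = 1 := by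
    rw [← Complex.exp_nat_mul, Complex.exp_eq_one_iff]
    exact ⟨d, by field_simp⟩
  have hne : Complex.exp (2 * Real.pi * Complex.I * d / N) ≠ 1 := by
    rw [Ne, Complex.exp_eq_one_iff]
    rintro ⟨n, hn⟩
    have h2 : (2 * Real.pi * Complex.I : ℂ) ≠ 0 := Complex.two_pi_I_ne_zero
    have hdn : (d : ℂ) = n * N := by
      rw [div_eq_iff hN0] at hn
      apply mul_left_cancel₀ h2
      rw [hn]
      ring
    have hdvd : (N : ℤ) ∣ d := ⟨n, by rw [mul_comm]; exact_mod_cast hdn⟩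
    exact hd (Int.eq_zero_of_abs_lt_dvd hdvd hdN)
  rw [geom_sum_eq hne, hpow, sub_self, zero_div]

/-- Pairing the samples of the `m`-th harmonic with the shifted `n`-th harmonic gives `N` times
that harmonic at `t` if `m = n`, and zero otherwise. -/
lemma sum_harmonic_sample (N : ℕ) (hNpos : 0 < N) (T : ℝ) (hT : 0 < T) (t : ℝ) (m n : ℤ)
    (hmn : |m - n| < N) :
    ∑ k : Fin N,
      Complex.exp (Complex.I * (m : ℂ) * ((2 * Real.pi / T : ℝ) : ℂ) * (samplePt N T k : ℂ)) *
        Complex.exp (Complex.I * (n : ℂ) * ((2 * Real.pi / T : ℝ) : ℂ) *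
          ((t - samplePt N T k : ℝ) : ℂ)) =
      if m = n then
        N * Complex.exp (Complex.I * (m : ℂ) * ((2 * Real.pi / T : ℝ) : ℂ) * (t : ℂ))
      else 0 := by
  have hN0 : (N : ℂ) ≠ 0 := by exact_mod_cast hNpos.ne'
  have hT0 : (T : ℂ) ≠ 0 := by exact_mod_cast hT.ne'
  have hterm : ∀ k : Fin N,
      Complex.exp (Complex.I * (m : ℂ) * ((2 * Real.pi / T : ℝ) : ℂ) * (samplePt N T k : ℂ)) *
        Complex.exp (Complex.I * (n : ℂ) * ((2 * Real.pi / T : ℝ) : ℂ) *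
          ((t - samplePt N T k : ℝ) : ℂ)) =
      Complex.exp (Complex.I * (n : ℂ) * ((2 * Real.pi / T : ℝ) : ℂ) * (t : ℂ)) *
        Complex.exp (2 * Real.pi * Complex.I * ((m - n : ℤ) : ℂ) / N) ^ (k : ℕ) := by
    intro k
    rw [← Complex.exp_nat_mul, ← Complex.exp_add, ← Complex.exp_add]
    congr 1
    unfold samplePt
    push_cast
    field_simp
    ring
  rw [Finset.sum_congr rfl fun k _ => hterm k, ← Finset.mul_sum]
  split_ifs with h
  · subst h
    simp [mul_comm]
  · rw [sum_exp_eq_zero N hNpos (m - n) (sub_ne_zero.mpr h) hmn, mul_zero]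

theorem sampling_reconstruction (N : ℕ) (hN : Odd N) (hNpos : 0 < N)
    (T : ℝ) (hT : 0 < T) (x : ℝ → ℂ) (hx : BandLimited N T x) (t : ℝ) :
    x t = ∑ k : Fin N, x (samplePt N T k) * dirichlet N T (t - samplePt N T k) := by
  obtain ⟨a, ha⟩ := hx
  have hN0 : (N : ℂ) ≠ 0 := by exact_mod_cast hNpos.ne'
  simp only [ha, dirichlet, Finset.sum_mul]
  rw [Finset.sum_comm]
  refine Finset.sum_congr rfl fun m hm => ?_
  have hkernel : ∀ n ∈ Finset.Icc (-(((N : ℤ) - 1) / 2)) (((N : ℤ) - 1) / 2),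
      ∑ k : Fin N,
        Complex.exp (Complex.I * (m : ℂ) * ((2 * Real.pi / T : ℝ) : ℂ) * (samplePt N T k : ℂ)) *
          Complex.exp (Complex.I * (n : ℂ) * ((2 * Real.pi / T : ℝ) : ℂ) *
            ((t - samplePt N T k : ℝ) : ℂ)) =
        if m = n then
          N * Complex.exp (Complex.I * (m : ℂ) * ((2 * Real.pi / T : ℝ) : ℂ) * (t : ℂ))
        else 0 := by
    intro n hn
    apply sum_harmonic_sample N hNpos T hT t m n
    rw [Finset.mem_Icc] at hm hn
    rw [abs_lt]
    omega
  have hpair := Finset.sum_congr rfl hkernel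
  rw [Finset.sum_ite_eq, if_pos hm, Finset.sum_comm] at hpair
  calc a m * Complex.exp (Complex.I * (m : ℂ) * ((2 * Real.pi / T : ℝ) : ℂ) * (t : ℂ))
      = a m * (1 / (N : ℂ)) *
          (N * Complex.exp (Complex.I * (m : ℂ) * ((2 * Real.pi / T : ℝ) : ℂ) * (t : ℂ))) := by
        field_simp
    _ = _ := by
        rw [← hpair, Finset.mul_sum]
        refine Finset.sum_congr rfl fun k _ => ?_
        rw [← Finset.mul_sum]
        ring
end

section
/- For any two functions f, g : ℝ → ℂ that are band-limited with period T, the continuous inner product over one period equals the discrete inner product of the samples: (N/T) · ∫_0^T conj(f(t)) · g(t) dt = Σ_{k=0}^{N−1} conj(f(t_k)) · g(t_k). -/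
/-!
By sesquilinearity both sides reduce to pairs of harmonics, whose product `conj e_m * e_n` is the
harmonic `e_j` with `j = n - m`. Since `|m|, |n| ≤ (N - 1) / 2`, one has `|j| < N`. For `j = 0` both
the scaled integral and the sample sum of `e_j` equal `N`. For `j ≠ 0` both vanish: the integral
because `e_j` has a `T`-periodic primitive, the sum because it is geometric with ratio
`exp (2πij/N)`, an `N`-th root of unity different from `1` as `N ∤ j` (no aliasing).
-/

open Complex Finset ComplexConjugate

/-- The case of a single harmonic. The bound `|j| < N` excludes aliasing: a nonzero multiple `j` of
`N` would give sample sum `N` but integral `0`. -/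
lemma harmonic_integral_eq_sum (N : ℕ) (hNpos : 0 < N) (T : ℝ) (hT : 0 < T) (j : ℤ)
    (hj : |j| < N) :
    ((N / T : ℝ) : ℂ) * ∫ t in (0 : ℝ)..T,
        Complex.exp (Complex.I * (j : ℂ) * ((2 * Real.pi / T : ℝ) : ℂ) * (t : ℂ))
      = ∑ k : Fin N, Complex.exp
          (Complex.I * (j : ℂ) * ((2 * Real.pi / T : ℝ) : ℂ) * (samplePt N T k : ℂ)) := by
  have hTc : (T : ℂ) ≠ 0 := by exact_mod_cast hT.ne'
  have hNc : (N : ℂ) ≠ 0 := by exact_mod_cast hNpos.ne'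
  have hpi : (Real.pi : ℂ) ≠ 0 := by exact_mod_cast Real.pi_ne_zero
  rcases eq_or_ne j 0 with rfl | hj0
  · simp
    field_simp
  · have hjc : (j : ℂ) ≠ 0 := by exact_mod_cast hj0
    have hc : Complex.I * (j : ℂ) * ((2 * Real.pi / T : ℝ) : ℂ) ≠ 0 := by
      push_cast
      simp [hjc, hTc, hpi]
    have hper : Complex.exp (Complex.I * (j : ℂ) * ((2 * Real.pi / T : ℝ) : ℂ) * (T : ℂ)) = 1 := by
      rw [Complex.exp_eq_one_iff]
      refine ⟨j, ?_⟩
      push_cast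
      field_simp
    rw [integral_exp_mul_complex hc, hper]
    set z : ℂ := Complex.exp (2 * Real.pi * Complex.I * j / N) with hz
    have hterm : ∀ k : Fin N, Complex.exp
        (Complex.I * (j : ℂ) * ((2 * Real.pi / T : ℝ) : ℂ) * (samplePt N T k : ℂ))
          = z ^ (k : ℕ) := by
      intro k
      rw [hz, ← Complex.exp_nat_mul, samplePt]
      congr 1
      push_cast
      field_simp
    have hzN : z ^ N = 1 := by
      rw [hz, ← Complex.exp_nat_mul, Complex.exp_eq_one_iff]
      refine ⟨j, ?_⟩
      field_simp
    have hz1 : z ≠ 1 := by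
      rw [hz, Ne, Complex.exp_eq_one_iff]
      rintro ⟨n, hn⟩
      have hI := Complex.I_ne_zero
      field_simp at hn
      have hn' : j = N * n := by exact_mod_cast hn
      exact hj0 (Int.eq_zero_of_abs_lt_dvd ⟨n, hn'⟩ hj)
    rw [Finset.sum_congr rfl fun k _ => hterm k, Fin.sum_univ_eq_sum_range (fun k => z ^ k),
      geom_sum_eq hz1, hzN]
    simp

theorem continuous_inner_eq_discrete_inner (N : ℕ) (hN : Odd N) (hNpos : 0 < N)
    (T : ℝ) (hT : 0 < T) (f g : ℝ → ℂ)
    (hf : BandLimited N T f) (hg : BandLimited N T g) :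
    ((N / T : ℝ) : ℂ) * ∫ t in (0 : ℝ)..T, conj (f t) * g t
      = ∑ k : Fin N, conj (f (samplePt N T k)) * g (samplePt N T k) := by
  obtain ⟨a, ha⟩ := hf
  obtain ⟨b, hb⟩ := hg
  set S := Finset.Icc (-(((N : ℤ) - 1) / 2)) (((N : ℤ) - 1) / 2) with hS
  have hprod : ∀ t : ℝ, conj (f t) * g t = ∑ m ∈ S, ∑ n ∈ S, conj (a m) * b n *
      Complex.exp (Complex.I * ((n - m : ℤ) : ℂ) * ((2 * Real.pi / T : ℝ) : ℂ) * (t : ℂ)) := by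
    intro t
    rw [ha, hb, map_sum, Finset.sum_mul_sum]
    refine Finset.sum_congr rfl fun m _ => Finset.sum_congr rfl fun n _ => ?_
    have hsplit : Complex.I * ((n - m : ℤ) : ℂ) * ((2 * Real.pi / T : ℝ) : ℂ) * (t : ℂ)
        = conj (Complex.I * (m : ℂ) * ((2 * Real.pi / T : ℝ) : ℂ) * (t : ℂ))
          + Complex.I * (n : ℂ) * ((2 * Real.pi / T : ℝ) : ℂ) * (t : ℂ) := by
      simp only [map_mul, Complex.conj_I, Complex.conj_ofReal, map_intCast]
      push_cast
      ring
    rw [hsplit, Complex.exp_add, Complex.exp_conj, map_mul]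
    ring
  simp only [hprod]
  rw [intervalIntegral.integral_finsetSum
    fun m _ => Continuous.intervalIntegrable (by fun_prop) _ _]
  rw [Finset.mul_sum, Finset.sum_comm]
  refine Finset.sum_congr rfl fun m hm => ?_
  rw [intervalIntegral.integral_finsetSum
    fun n _ => Continuous.intervalIntegrable (by fun_prop) _ _]
  rw [Finset.mul_sum, Finset.sum_comm]
  refine Finset.sum_congr rfl fun n hn => ?_
  rw [intervalIntegral.integral_const_mul, ← Finset.mul_sum,
    ← harmonic_integral_eq_sum N hNpos T hT (n - m)]
  · ring
  · rw [hS, Finset.mem_Icc] at hm hn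
    rw [abs_lt]
    omega
end

section
/- The overlap matrix of the periodic Gabor functions is given by sampling: for all i, j ∈ {0,…,N−1}, (N/T) · ∫_0^T conj(g̃_i(t)) · g̃_j(t) dt = Σ_{k=0}^{N−1} conj(G_{ki}) · G_{kj} = (G†G)_{ij}. -/
/-!
The `N` frequencies occurring in `D` are orthogonal on `[0, T]`, so `D` reproduces itself:
`∫₀ᵀ conj (D (t - a)) * D (t - b) dt = (T / N) * D (a - b)` (`integral_conj_dirichlet_mul`).
At a difference of sample points the kernel is a geometric sum over `N`-th roots of unity, so
`D (t_k - t_l) = δ_{kl}` (`dirichlet_samplePt_sub`). Hence the translates `D (t - t_k)` are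
orthogonal with squared norm `T / N`, and expanding both pg functions in them by sesquilinearity
gives the sum of `conj (G k i) * G k j`.
-/


open Complex Finset ComplexConjugate Matrix

/-- The periodic Gabor (pg) functions: `g̃_j(t) = Σ_k G_{kj} D(t - t_k)`. -/
noncomputable def pg (N : ℕ) (T : ℝ) (G : Matrix (Fin N) (Fin N) ℂ) (j : Fin N) (t : ℝ) : ℂ :=
  ∑ k : Fin N, G k j * dirichlet N T (t - samplePt N T k)

lemma integral_exp_freq (T : ℝ) (hT : 0 < T) (m : ℤ) :
    ∫ t in (0 : ℝ)..T, Complex.exp (Complex.I * (m : ℂ) * ((2 * Real.pi / T : ℝ) : ℂ) * (t : ℂ))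
      = if m = 0 then (T : ℂ) else 0 := by
  have hT' : (T : ℂ) ≠ 0 := by exact_mod_cast hT.ne'
  split_ifs with h
  · subst h; simp
  · have hc : Complex.I * (m : ℂ) * ((2 * Real.pi / T : ℝ) : ℂ) ≠ 0 := by
      have : (m : ℂ) ≠ 0 := by exact_mod_cast h
      have : ((2 * Real.pi / T : ℝ) : ℂ) ≠ 0 := by
        exact_mod_cast (by positivity : (2 * Real.pi / T : ℝ) ≠ 0)
      simp_all
    rw [integral_exp_mul_complex hc]
    have : Complex.I * (m : ℂ) * ((2 * Real.pi / T : ℝ) : ℂ) * (T : ℂ)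
        = m * (2 * Real.pi * Complex.I) := by
      push_cast; field_simp
    rw [this, Complex.exp_int_mul_two_pi_mul_I]
    simp

lemma continuous_dirichlet (N : ℕ) (T : ℝ) : Continuous (dirichlet N T) := by
  unfold dirichlet; fun_prop

lemma conj_dirichlet_mul (N : ℕ) (T a b t : ℝ) :
    conj (dirichlet N T (t - a)) * dirichlet N T (t - b) =
      (1 / (N : ℂ)) * (1 / (N : ℂ)) *
      ∑ m ∈ Finset.Icc (-(((N : ℤ) - 1) / 2)) (((N : ℤ) - 1) / 2),
      ∑ n ∈ Finset.Icc (-(((N : ℤ) - 1) / 2)) (((N : ℤ) - 1) / 2),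
        Complex.exp (Complex.I * (m : ℂ) * ((2 * Real.pi / T : ℝ) : ℂ) * (a : ℂ)
          - Complex.I * (n : ℂ) * ((2 * Real.pi / T : ℝ) : ℂ) * (b : ℂ)) *
        Complex.exp (Complex.I * ((n - m : ℤ) : ℂ) * ((2 * Real.pi / T : ℝ) : ℂ) * (t : ℂ)) := by
  unfold dirichlet
  rw [map_mul, map_sum, mul_mul_mul_comm, Finset.sum_mul_sum]
  congr 1
  · simp
  refine Finset.sum_congr rfl fun m _ => Finset.sum_congr rfl fun n _ => ?_
  rw [← Complex.exp_conj, ← Complex.exp_add, ← Complex.exp_add]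
  congr 1
  simp only [map_mul, Complex.conj_I, Complex.conj_ofReal, map_intCast]
  push_cast
  ring

/-- The reproducing property of the Dirichlet kernel, from orthogonality of its frequencies. -/
lemma integral_conj_dirichlet_mul (N : ℕ) (T : ℝ) (hT : 0 < T) (a b : ℝ) :
    ∫ t in (0 : ℝ)..T, conj (dirichlet N T (t - a)) * dirichlet N T (t - b)
      = (T / N : ℂ) * dirichlet N T (a - b) := by
  simp_rw [conj_dirichlet_mul]
  rw [intervalIntegral.integral_const_mul, intervalIntegral.integral_finsetSum
    fun m _ => Continuous.intervalIntegrable (by fun_prop) _ _]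
  have key : ∀ m ∈ Finset.Icc (-(((N : ℤ) - 1) / 2)) (((N : ℤ) - 1) / 2),
      (∫ t in (0 : ℝ)..T, ∑ n ∈ Finset.Icc (-(((N : ℤ) - 1) / 2)) (((N : ℤ) - 1) / 2),
        Complex.exp (Complex.I * (m : ℂ) * ((2 * Real.pi / T : ℝ) : ℂ) * (a : ℂ)
          - Complex.I * (n : ℂ) * ((2 * Real.pi / T : ℝ) : ℂ) * (b : ℂ)) *
        Complex.exp (Complex.I * ((n - m : ℤ) : ℂ) * ((2 * Real.pi / T : ℝ) : ℂ) * (t : ℂ)))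
      = T * Complex.exp (Complex.I * (m : ℂ) * ((2 * Real.pi / T : ℝ) : ℂ) *
          ((a - b : ℝ) : ℂ)) := by
    intro m hm
    rw [intervalIntegral.integral_finsetSum
      fun n _ => Continuous.intervalIntegrable (by fun_prop) _ _]
    simp_rw [intervalIntegral.integral_const_mul, integral_exp_freq T hT]
    rw [Finset.sum_eq_single_of_mem m hm]
    · rw [if_pos (sub_self m), mul_comm]
      congr 2
      push_cast
      ring
    · intro n _ hn
      rw [if_neg (sub_ne_zero.mpr hn), mul_zero]
  rw [Finset.sum_congr rfl key, ← Finset.mul_sum]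
  unfold dirichlet
  ring

lemma sum_zpow_Icc_eq_zero (M : ℕ) (z : ℂ) (hz : z ≠ 1) (hzN : z ^ (2 * M + 1) = 1) :
    ∑ m ∈ Finset.Icc (-(M : ℤ)) M, z ^ m = 0 := by
  have hz0 : z ≠ 0 := by
    rintro rfl
    simp at hzN
  have h : ∑ m ∈ Finset.Icc (-(M : ℤ)) M, z ^ m
      = ∑ i ∈ Finset.range (2 * M + 1), z ^ (-(M : ℤ)) * z ^ i := by
    refine Finset.sum_nbij' (fun m => (m + M).toNat) (fun i => (i : ℤ) - M) ?_ ?_ ?_ ?_ ?_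
    · intro m hm; simp only [Finset.mem_Icc, Finset.mem_range] at *; omega
    · intro m hm; simp only [Finset.mem_Icc, Finset.mem_range] at *; omega
    · intro m hm; simp only [Finset.mem_Icc] at *; omega
    · intro m hm; simp
    · intro m hm
      simp only [Finset.mem_Icc] at hm
      rw [← zpow_natCast z, ← zpow_add₀ hz0]
      congr 1
      omega
  rw [h, ← Finset.mul_sum, geom_sum_eq hz, hzN]
  simp

/-- The Dirichlet kernel is the cardinal function of the sample points. -/
lemma dirichlet_samplePt_sub (N : ℕ) (hN : Odd N) (T : ℝ) (hT : 0 < T) (k l : Fin N) :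
    dirichlet N T (samplePt N T k - samplePt N T l) = if k = l then 1 else 0 := by
  have hT' : (T : ℂ) ≠ 0 := by exact_mod_cast hT.ne'
  obtain ⟨M, hM⟩ := hN
  have hN0 : (N : ℂ) ≠ 0 := by
    have : N ≠ 0 := by omega
    exact_mod_cast this
  have hM2 : ((N : ℤ) - 1) / 2 = M := by omega
  unfold dirichlet samplePt
  rw [hM2]
  split_ifs with h
  · subst h
    have hc : ((M : ℤ) + 1 + (M : ℤ)).toNat = N := by omega
    simp [hc, hN0]
  · set z : ℂ := Complex.exp (2 * Real.pi * Complex.I * (((k : ℤ) - (l : ℤ) : ℤ) : ℂ) / N) with hz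
    have hterm : ∀ m : ℤ, Complex.exp (Complex.I * (m : ℂ) * ((2 * Real.pi / T : ℝ) : ℂ) *
        (((k : ℝ) * T / N - (l : ℝ) * T / N : ℝ) : ℂ)) = z ^ m := by
      intro m
      rw [hz, ← Complex.exp_int_mul]
      congr 1
      push_cast
      field_simp
    simp_rw [hterm]
    rw [sum_zpow_Icc_eq_zero, mul_zero]
    · intro h1
      rw [hz, Complex.exp_eq_one_iff] at h1
      obtain ⟨n, hn⟩ := h1
      have hpi := Complex.two_pi_I_ne_zero
      have h2 : (((k : ℤ) - (l : ℤ) : ℤ) : ℂ) = n * N := by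
        rw [div_eq_iff hN0] at hn
        apply mul_left_cancel₀ hpi
        rw [hn]; ring
      have h3 : (k : ℤ) - (l : ℤ) = n * N := by exact_mod_cast h2
      -- A multiple of `N` strictly between `-N` and `N` vanishes.
      have h4 : (k : ℤ) - (l : ℤ) = 0 := by
        refine Int.eq_zero_of_abs_lt_dvd (Dvd.intro_left n h3.symm) ?_
        rw [abs_lt]
        omega
      exact h (Fin.ext (by omega))
    · rw [← hM, hz, ← Complex.exp_nat_mul, mul_div_cancel₀ _ hN0, mul_comm,
        Complex.exp_int_mul_two_pi_mul_I]

theorem pg_overlap_matrix (N : ℕ) (hN : Odd N) (hNpos : 0 < N)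
    (T : ℝ) (hT : 0 < T) (G : Matrix (Fin N) (Fin N) ℂ) (i j : Fin N) :
    ((N / T : ℝ) : ℂ) * ∫ t in (0 : ℝ)..T, conj (pg N T G i t) * pg N T G j t
        = ∑ k : Fin N, conj (G k i) * G k j ∧
    (∑ k : Fin N, conj (G k i) * G k j) = (Gᴴ * G) i j := by
  refine ⟨?_, by simp [Matrix.mul_apply]⟩
  have hT' : (T : ℂ) ≠ 0 := by exact_mod_cast hT.ne'
  have hN0 : (N : ℂ) ≠ 0 := by exact_mod_cast hNpos.ne'
  have hexp : ∀ t : ℝ, conj (pg N T G i t) * pg N T G j t =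
      ∑ k : Fin N, ∑ l : Fin N, (conj (G k i) * G l j) *
        (conj (dirichlet N T (t - samplePt N T k)) * dirichlet N T (t - samplePt N T l)) := by
    intro t
    unfold pg
    rw [map_sum, Finset.sum_mul_sum]
    refine Finset.sum_congr rfl fun k _ => Finset.sum_congr rfl fun l _ => ?_
    rw [map_mul, mul_mul_mul_comm]
  have hD := continuous_dirichlet N T
  have hDc : ∀ a, Continuous fun t : ℝ => conj (dirichlet N T (t - a)) := fun a =>
    Complex.continuous_conj.comp (hD.comp (continuous_id.sub continuous_const))
  simp_rw [hexp]
  rw [intervalIntegral.integral_finsetSum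
    fun k _ => Continuous.intervalIntegrable (by fun_prop) _ _, Finset.mul_sum]
  refine Finset.sum_congr rfl fun k _ => ?_
  rw [intervalIntegral.integral_finsetSum
    fun l _ => Continuous.intervalIntegrable (by fun_prop) _ _]
  simp_rw [intervalIntegral.integral_const_mul, integral_conj_dirichlet_mul N T hT,
    dirichlet_samplePt_sub N hN T hT]
  simp only [mul_ite, mul_one, mul_zero, Finset.sum_ite_eq, Finset.mem_univ, if_true]
  push_cast
  field_simp
end

section
/- If the matrix G is invertible, then the periodic Gabor functions span the full band-limited space: for every function x : ℝ → ℂ that is band-limited with period T, there exist coefficients c_0, …, c_{N−1} ∈ ℂ such that x(t) = Σ_{j=0}^{N−1} c_j · g̃_j(t) for all t ∈ ℝ. -/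
/-!
The `N` sample points resolve the band `|m| ≤ (N-1)/2`: two distinct frequencies of the band differ
by a nonzero integer of absolute value less than `N`, so the corresponding characters of `ℤ/N` are
orthogonal (`sum_bandMode_samplePt`). Hence a band-limited function is recovered from its samples,
`x(t) = Σ_k x(t_k) D(t - t_k)` (`sampling_formula`). If `G` is invertible, then `c = G⁻¹ s`, where
`s` is the vector of samples, satisfies `G c = s`, and exchanging the sums in `Σ_j c_j g̃_j(t)` gives
`Σ_k (G c)_k D(t - t_k) = x(t)`.
-/

open Complex Finset Matrix

/-- The harmonic `exp(i m ω₀ t)`, `ω₀ = 2π/T`. -/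
noncomputable def bandMode (T : ℝ) (m : ℤ) (t : ℝ) : ℂ :=
  Complex.exp (Complex.I * (m : ℂ) * ((2 * Real.pi / T : ℝ) : ℂ) * (t : ℂ))

lemma bandMode_sub (T : ℝ) (m : ℤ) (s t : ℝ) :
    bandMode T m (s - t) = bandMode T m s * bandMode T (-m) t := by
  unfold bandMode
  rw [← Complex.exp_add]
  congr 1
  push_cast
  ring

/-- At the sample points, the harmonic `m` times the conjugate of the harmonic `n` runs
through a geometric progression. -/
lemma bandMode_mul_samplePt (N : ℕ) (hNpos : 0 < N) (T : ℝ) (hT : 0 < T) (m n : ℤ) (k : Fin N) :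
    bandMode T m (samplePt N T k) * bandMode T (-n) (samplePt N T k) =
      Complex.exp (2 * Real.pi * Complex.I * ((m - n : ℤ) / (N : ℂ))) ^ (k : ℕ) := by
  have hN0 : (N : ℂ) ≠ 0 := by exact_mod_cast hNpos.ne'
  have hT0 : (T : ℂ) ≠ 0 := by exact_mod_cast hT.ne'
  unfold bandMode samplePt
  rw [← Complex.exp_add, ← Complex.exp_nat_mul]
  congr 1
  push_cast
  field_simp
  ring

/-- Discrete orthogonality of two harmonics whose frequencies differ by less than `N`. -/
lemma sum_bandMode_samplePt (N : ℕ) (hNpos : 0 < N) (T : ℝ) (hT : 0 < T) (m n : ℤ)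
    (hmn : |m - n| < N) :
    ∑ k : Fin N, bandMode T m (samplePt N T k) * bandMode T (-n) (samplePt N T k) =
      if n = m then (N : ℂ) else 0 := by
  have hN0 : (N : ℂ) ≠ 0 := by exact_mod_cast hNpos.ne'
  simp only [bandMode_mul_samplePt N hNpos T hT]
  split_ifs with h
  · simp [h]
  · set z := Complex.exp (2 * Real.pi * Complex.I * ((m - n : ℤ) / (N : ℂ))) with hz
    rw [Fin.sum_univ_eq_sum_range (fun k => z ^ k) N]
    have hzN : z ^ N = 1 := by
      rw [hz, ← Complex.exp_nat_mul, Complex.exp_eq_one_iff]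
      exact ⟨m - n, by field_simp⟩
    have hz1 : z ≠ 1 := by
      intro h1
      rw [hz, Complex.exp_eq_one_iff] at h1
      obtain ⟨l, hl⟩ := h1
      rw [mul_comm, mul_left_inj' Complex.two_pi_I_ne_zero, div_eq_iff hN0] at hl
      have hl' : m - n = l * N := by exact_mod_cast hl
      have := Int.eq_zero_of_abs_lt_dvd (Dvd.intro_left l hl'.symm) hmn
      omega
    rw [geom_sum_eq hz1, hzN, sub_self, zero_div]

/-- Sampling expansion of a single harmonic of the band. -/
lemma bandMode_sampling (N : ℕ) (hNpos : 0 < N) (T : ℝ) (hT : 0 < T) (m : ℤ)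
    (hm : m ∈ Finset.Icc (-(((N : ℤ) - 1) / 2)) (((N : ℤ) - 1) / 2)) (t : ℝ) :
    bandMode T m t =
      ∑ k : Fin N, bandMode T m (samplePt N T k) * dirichlet N T (t - samplePt N T k) := by
  have hN0 : (N : ℂ) ≠ 0 := by exact_mod_cast hNpos.ne'
  have hD : ∀ s, dirichlet N T s = (1 / (N : ℂ)) *
      ∑ n ∈ Finset.Icc (-(((N : ℤ) - 1) / 2)) (((N : ℤ) - 1) / 2), bandMode T n s :=
    fun _ => rfl
  symm
  calc ∑ k : Fin N, bandMode T m (samplePt N T k) * dirichlet N T (t - samplePt N T k)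
      = ∑ n ∈ Finset.Icc (-(((N : ℤ) - 1) / 2)) (((N : ℤ) - 1) / 2),
          1 / (N : ℂ) * bandMode T n t *
            ∑ k : Fin N, bandMode T m (samplePt N T k) * bandMode T (-n) (samplePt N T k) := by
        simp only [hD, bandMode_sub, Finset.mul_sum]
        rw [Finset.sum_comm]
        refine Finset.sum_congr rfl fun n _ => Finset.sum_congr rfl fun k _ => ?_
        ring
    _ = ∑ n ∈ Finset.Icc (-(((N : ℤ) - 1) / 2)) (((N : ℤ) - 1) / 2),
          1 / (N : ℂ) * bandMode T n t * if n = m then (N : ℂ) else 0 := by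
        refine Finset.sum_congr rfl fun n hn => ?_
        rw [sum_bandMode_samplePt N hNpos T hT]
        rw [Finset.mem_Icc] at hm hn
        rw [abs_lt]
        omega
    _ = bandMode T m t := by
        simp only [mul_ite, mul_zero, Finset.sum_ite_eq', if_pos hm]
        field_simp

/-- Sampling theorem for periodic band-limited functions. -/
lemma sampling_formula (N : ℕ) (hNpos : 0 < N) (T : ℝ) (hT : 0 < T) (x : ℝ → ℂ)
    (hx : BandLimited N T x) (t : ℝ) :
    x t = ∑ k : Fin N, x (samplePt N T k) * dirichlet N T (t - samplePt N T k) := by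
  obtain ⟨a, ha⟩ := hx
  have ha' : ∀ s, x s = ∑ m ∈ Finset.Icc (-(((N : ℤ) - 1) / 2)) (((N : ℤ) - 1) / 2),
      a m * bandMode T m s := ha
  simp only [ha', Finset.sum_mul]
  rw [Finset.sum_comm]
  refine Finset.sum_congr rfl fun m hm => ?_
  rw [bandMode_sampling N hNpos T hT m hm t, Finset.mul_sum]
  exact Finset.sum_congr rfl fun k _ => (mul_assoc _ _ _).symm

theorem pg_spans_bandlimited (N : ℕ) (hN : Odd N) (hNpos : 0 < N)
    (T : ℝ) (hT : 0 < T) (G : Matrix (Fin N) (Fin N) ℂ) (hG : IsUnit G)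
    (x : ℝ → ℂ) (hx : BandLimited N T x) :
    ∃ c : Fin N → ℂ, ∀ t : ℝ, x t = ∑ j : Fin N, c j * pg N T G j t := by
  obtain ⟨c, hc⟩ := (Matrix.mulVec_surjective_iff_isUnit.mpr hG) fun k => x (samplePt N T k)
  refine ⟨c, fun t => ?_⟩
  have hck : ∀ k, x (samplePt N T k) = ∑ j, G k j * c j := fun k => (congrFun hc k).symm
  rw [sampling_formula N hNpos T hT x hx t]
  simp only [hck, pg, Finset.sum_mul, Finset.mul_sum]
  rw [Finset.sum_comm]
  refine Finset.sum_congr rfl fun j _ => Finset.sum_congr rfl fun k _ => ?_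
  ring
end

section
/- For invertible G, the explicit pg expansion holds: for every function x : ℝ → ℂ that is band-limited with period T and every t ∈ ℝ, x(t) = Σ_{m=0}^{N−1} Σ_{n=0}^{N−1} g̃_m(t) · (S^{−1})_{mn} · ( Σ_{k=0}^{N−1} conj(G_{kn}) · x(t_k) ), where S = G†G. -/
/-!
A band-limited `x` is recovered from its samples by Dirichlet interpolation,
`x(t) = Σ_k D(t - t_k) x(t_k)` (`bandLimited_interpolation`): by linearity it suffices to take a
single harmonic, and there the identity is the orthogonality of the harmonics on the `N` sample
points (`sum_harmonic_samplePt`), a geometric sum over an `N`-th root of unity. Distinct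
frequencies in the band differ by less than `N`, so no aliasing occurs.

With `d_k = D(t - t_k)` and `X_k = x(t_k)`, the pg expansion reads `d (G S⁻¹ G†) X`, and
`G S⁻¹ G† = G G⁻¹ (G†)⁻¹ G† = 1` because `G` is invertible, so it equals `d · X = x(t)`.
-/

open Complex Finset Matrix ComplexConjugate

/-- Orthogonality of the harmonics on the sample points. -/
lemma sum_harmonic_samplePt (N : ℕ) (hNpos : 0 < N) (T : ℝ) (hT : 0 < T) (j : ℤ)
    (hj : |j| < N) :
    ∑ k : Fin N, Complex.exp (Complex.I * (j : ℂ) * ((2 * Real.pi / T : ℝ) : ℂ) *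
      (samplePt N T k : ℂ)) = if j = 0 then (N : ℂ) else 0 := by
  have hN0 : (N : ℂ) ≠ 0 := by exact_mod_cast hNpos.ne'
  have hT0 : (T : ℂ) ≠ 0 := by exact_mod_cast hT.ne'
  split_ifs with h
  · simp [h]
  set z : ℂ := Complex.exp (2 * Real.pi * Complex.I * j / N) with hz
  have hterm : ∀ k : Fin N, Complex.exp (Complex.I * (j : ℂ) * ((2 * Real.pi / T : ℝ) : ℂ) *
      (samplePt N T k : ℂ)) = z ^ (k : ℕ) := by
    intro k
    rw [hz, ← Complex.exp_nat_mul]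
    congr 1
    simp only [samplePt]
    push_cast
    field_simp
  have hzN : z ^ N = 1 := by
    rw [hz, ← Complex.exp_nat_mul, Complex.exp_eq_one_iff]
    exact ⟨j, by field_simp⟩
  have hz1 : z ≠ 1 := by
    intro h1
    rw [hz, Complex.exp_eq_one_iff] at h1
    obtain ⟨n, hn⟩ := h1
    have h2 : (2 * Real.pi * Complex.I : ℂ) ≠ 0 := Complex.two_pi_I_ne_zero
    have h3 : (j : ℂ) = N * n := by
      rw [div_eq_iff hN0] at hn
      apply mul_left_cancel₀ h2
      rw [hn]
      ring
    have h4 : j = N * n := by exact_mod_cast h3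
    exact h (Int.eq_zero_of_abs_lt_dvd ⟨n, h4⟩ hj)
  simp_rw [hterm]
  rw [Fin.sum_univ_eq_sum_range (fun i => z ^ i) N, geom_sum_eq hz1, hzN]
  simp

/-- Dirichlet interpolation of a band-limited function from its samples. -/
lemma bandLimited_interpolation (N : ℕ) (hNpos : 0 < N) (T : ℝ) (hT : 0 < T)
    (x : ℝ → ℂ) (hx : BandLimited N T x) (t : ℝ) :
    x t = ∑ k : Fin N, dirichlet N T (t - samplePt N T k) * x (samplePt N T k) := by
  have hN0 : (N : ℂ) ≠ 0 := by exact_mod_cast hNpos.ne'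
  obtain ⟨a, ha⟩ := hx
  simp only [ha, dirichlet]
  set B := Finset.Icc (-(((N : ℤ) - 1) / 2)) (((N : ℤ) - 1) / 2) with hB
  set w : ℂ := ((2 * Real.pi / T : ℝ) : ℂ) with hw
  -- `D(t - s) e_p(s)` separated into harmonics of `t` times harmonics of `s`
  have hexp : ∀ (m p : ℤ) (k : Fin N),
      Complex.exp (Complex.I * m * w * ((t - samplePt N T k : ℝ) : ℂ)) *
        (a p * Complex.exp (Complex.I * p * w * (samplePt N T k : ℂ))) =
      a p * Complex.exp (Complex.I * m * w * t) *
        Complex.exp (Complex.I * ((p - m : ℤ) : ℂ) * w * (samplePt N T k : ℂ)) := by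
    intro m p k
    rw [mul_left_comm, ← Complex.exp_add, mul_assoc (a p), ← Complex.exp_add]
    congr 2
    push_cast
    ring
  have horth : ∀ m ∈ B, ∀ p ∈ B,
      ∑ k : Fin N, Complex.exp (Complex.I * ((p - m : ℤ) : ℂ) * w * (samplePt N T k : ℂ)) =
        if m = p then (N : ℂ) else 0 := by
    intro m hm p hp
    rw [hB, Finset.mem_Icc] at hm hp
    rw [sum_harmonic_samplePt N hNpos T hT (p - m) (by rw [abs_lt]; omega)]
    simp only [sub_eq_zero, eq_comm]
  symm
  calc _ = (1 / (N : ℂ)) * ∑ m ∈ B, ∑ p ∈ B, a p * Complex.exp (Complex.I * m * w * t) *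
          ∑ k : Fin N,
            Complex.exp (Complex.I * ((p - m : ℤ) : ℂ) * w * (samplePt N T k : ℂ)) := by
        simp_rw [mul_assoc (1 / (N : ℂ)), ← Finset.mul_sum, Finset.sum_mul_sum, hexp]
        rw [Finset.sum_comm]
        congr 1
        refine Finset.sum_congr rfl fun m _ => ?_
        rw [Finset.sum_comm]
        simp_rw [Finset.mul_sum]
    _ = (1 / (N : ℂ)) * ∑ m ∈ B, a m * Complex.exp (Complex.I * m * w * t) * N := by
        congr 1
        refine Finset.sum_congr rfl fun m hm => ?_
        rw [Finset.sum_congr rfl fun p hp => by rw [horth m hm p hp]]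
        simp [hm]
    _ = _ := by
        rw [← Finset.sum_mul, one_div, mul_comm, mul_assoc, mul_inv_cancel₀ hN0, mul_one]

theorem pg_expansion (N : ℕ) (hN : Odd N) (hNpos : 0 < N)
    (T : ℝ) (hT : 0 < T) (G : Matrix (Fin N) (Fin N) ℂ) (hG : IsUnit G)
    (x : ℝ → ℂ) (hx : BandLimited N T x) (t : ℝ) :
    x t = ∑ m : Fin N, ∑ n : Fin N,
      pg N T G m t * (Gᴴ * G)⁻¹ m n * (∑ k : Fin N, conj (G k n) * x (samplePt N T k)) := by
  set d : Fin N → ℂ := fun k => dirichlet N T (t - samplePt N T k) with hd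
  set X : Fin N → ℂ := fun k => x (samplePt N T k) with hX
  have hdet : IsUnit G.det := (Matrix.isUnit_iff_isUnit_det G).mp hG
  have hdet' : IsUnit Gᴴ.det := by
    rw [Matrix.det_conjTranspose]
    exact hdet.star
  have hproj : G * (Gᴴ * G)⁻¹ * Gᴴ = 1 := by
    rw [Matrix.mul_inv_rev, ← Matrix.mul_assoc, Matrix.mul_nonsing_inv G hdet, Matrix.one_mul,
      Matrix.nonsing_inv_mul _ hdet']
  have hpg : ∀ m, pg N T G m t = (d ᵥ* G) m := by
    intro m
    simp [pg, Matrix.vecMul, dotProduct, hd, mul_comm]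
  have hcoef : ∀ n, ∑ k : Fin N, conj (G k n) * x (samplePt N T k) = (Gᴴ *ᵥ X) n := by
    intro n
    simp [Matrix.mulVec, dotProduct, hX]
  calc x t = d ⬝ᵥ X := bandLimited_interpolation N hNpos T hT x hx t
    _ = (d ᵥ* G) ⬝ᵥ ((Gᴴ * G)⁻¹ *ᵥ (Gᴴ *ᵥ X)) := by
        rw [← Matrix.dotProduct_mulVec, Matrix.mulVec_mulVec, Matrix.mulVec_mulVec,
          hproj, Matrix.one_mulVec]
    _ = _ := by
        simp_rw [hpg, hcoef]
        simp only [dotProduct, Matrix.mulVec, Finset.mul_sum, mul_assoc]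
end
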